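/- arXiv:2301.03917 — 2 statements merged into one kernel-verified Lean document; each statement's English description precedes it below -/
import Mathlib

section
/- Let G be a finite nilpotent group and let χ be an irreducible complex character of G. Then the number of elements x ∈ G such that χ(x) = 0 or χ(x) is a root of unity is at least |G|/2. -/
open CategoryTheory

/-!
Write `Z` for the subgroup of elements acting by operators that commute with the whole image of the
representation; by Schur's lemma these operators are scalars. If `Z` is everything, every line is
invariant, so `χ` is linear and its values are roots of unity. Otherwise nilpotency yields `a ∉ Z`
with `⁅a, g⁆ ∈ Z` for every `g`. For such an `a`, the conjugate `a g a⁻¹` acts as a scalar multiple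
of `g`, and this scalar is not `1` unless `g` commutes with `a` modulo the kernel. Comparing traces,
`χ` vanishes outside the centralizer of `a` modulo the kernel. This subgroup is proper, hence
contains at most half of the group.
-/

open scoped commutatorElement

section Group

variable {G M : Type*} [Group G] [MulOneClass M]

theorem exists_notMem_forall_commutatorElement_mem [Group.IsNilpotent G] {N : Subgroup G}
    [N.Normal] (hN : N ≠ ⊤) : ∃ a ∉ N, ∀ g, ⁅a, g⁆ ∈ N := by
  have : Nontrivial (G ⧸ N) := QuotientGroup.nontrivial_iff.mpr hN
  obtain ⟨⟨z, hz⟩, hz_ne⟩ :=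
    Subgroup.ne_bot_iff_exists_ne_one.mp (Group.IsNilpotent.center_ne_bot (G ⧸ N))
  obtain ⟨a, rfl⟩ := QuotientGroup.mk_surjective z
  refine ⟨a, fun ha => hz_ne (Subtype.ext ((QuotientGroup.eq_one_iff a).mpr ha)), fun g => ?_⟩
  rw [← QuotientGroup.eq_one_iff, ← QuotientGroup.mk'_apply, map_commutatorElement,
    commutatorElement_eq_one_iff_mul_comm]
  exact (Subgroup.mem_center_iff.mp hz _).symm

theorem card_le_two_mul_ncard_compl [Finite G] {H : Subgroup G} (hH : H ≠ ⊤) :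
    Nat.card G ≤ 2 * ((H : Set G)ᶜ).ncard := by
  have hmul : Nat.card H * H.index = Nat.card G := H.card_mul_index
  have hindex : 1 < H.index := H.one_lt_index_of_ne_top hH
  have hadd : Nat.card H + ((H : Set G)ᶜ).ncard = Nat.card G :=
    Set.ncard_add_ncard_compl (H : Set G)
  nlinarith

/-- The preimage in `G` of the center of `G ⧸ φ.ker`. For an irreducible representation `φ` over an
algebraically closed field it is the subgroup of elements acting as scalars, usually called the
center of the character. -/
def centerModKer (φ : G →* M) : Subgroup G :=
  (Subgroup.center (G ⧸ φ.ker)).comap (QuotientGroup.mk' φ.ker)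

/-- The preimage in `G` of the centralizer of the class of `a` in `G ⧸ φ.ker`, that is, the elements
whose image under `φ` commutes with `φ a`. -/
def centralizerModKer (φ : G →* M) (a : G) : Subgroup G :=
  (Subgroup.centralizer {QuotientGroup.mk' φ.ker a}).comap (QuotientGroup.mk' φ.ker)

theorem commute_mk'_ker_iff (φ : G →* M) {a g : G} :
    Commute (QuotientGroup.mk' φ.ker a) (QuotientGroup.mk' φ.ker g) ↔ Commute (φ a) (φ g) := by
  simp only [commute_iff_eq, ← map_mul, MonoidHom.eq_iff, QuotientGroup.ker_mk']

theorem mem_centerModKer {φ : G →* M} {a : G} :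
    a ∈ centerModKer φ ↔ ∀ g, Commute (φ a) (φ g) := by
  rw [centerModKer, Subgroup.mem_comap, Subgroup.mem_center_iff,
    (QuotientGroup.mk'_surjective φ.ker).forall]
  exact forall_congr' fun g => eq_comm.trans (commute_mk'_ker_iff φ)

theorem mem_centralizerModKer {φ : G →* M} {a g : G} :
    g ∈ centralizerModKer φ a ↔ Commute (φ a) (φ g) := by
  rw [centralizerModKer, Subgroup.mem_comap, Subgroup.mem_centralizer_singleton_iff,
    ← commute_mk'_ker_iff, commute_iff_eq, eq_comm]

instance (φ : G →* M) : (centerModKer φ).Normal :=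
  inferInstanceAs ((Subgroup.center (G ⧸ φ.ker)).comap _).Normal

theorem centralizerModKer_ne_top {φ : G →* M} {a : G} (ha : a ∉ centerModKer φ) :
    centralizerModKer φ a ≠ ⊤ := fun htop =>
  ha <| mem_centerModKer.mpr fun g => mem_centralizerModKer.mp (htop ▸ Subgroup.mem_top g)

end Group

section FDRep

universe u v

variable {k : Type u} {G : Type v} [Field k] [Monoid G]

/-- The inclusion of a subrepresentation, as a morphism of `FDRep k G`, so that categorical
simplicity can be applied to it. -/
def subrepresentationInclusion {V : FDRep k G}
    (W : Subrepresentation (V.ρ : Representation k G V)) : FDRep.of W.toRepresentation ⟶ V where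
  hom := FGModuleCat.ofHom W.toSubmodule.subtype
  comm _ := rfl

theorem isIrreducible_of_simple (V : FDRep k G) [Simple V] :
    Representation.IsIrreducible (V.ρ : Representation k G V) where
  exists_pair_ne := by
    refine ⟨⊥, ⊤, fun hbot => id_nonzero V ?_⟩
    ext v
    exact (hbot ▸ trivial : v ∈ (⊥ : Subrepresentation (V.ρ : Representation k G V)))
  eq_bot_or_eq_top W := by
    let ι := subrepresentationInclusion W
    have : Mono ι := ConcreteCategory.mono_of_injective ι Subtype.val_injective
    by_cases hι : ι = 0
    · have hsubtype : W.toSubmodule.subtype = 0 := congrArg (fun f => f.hom.hom.hom) hι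
      refine .inl (Subrepresentation.toSubmodule_injective ?_)
      rw [← Submodule.range_subtype W.toSubmodule, hsubtype, LinearMap.range_zero]
      rfl
    · have : IsIso ι := isIso_of_mono_of_nonzero hι
      refine .inr (eq_top_iff.mpr fun v _ => ?_)
      obtain ⟨w, rfl⟩ := (ConcreteCategory.bijective_of_isIso ι).surjective v
      exact w.2

end FDRep

section Representation

variable {k G V : Type*} [Field k] [Group G] [AddCommGroup V] [Module k V]
  (ρ : Representation k G V)

theorem exists_eq_smul_one_of_mem_centerModKer [IsAlgClosed k] [FiniteDimensional k V]
    [ρ.IsIrreducible] {a : G} (ha : a ∈ centerModKer ρ) : ∃ c : k, ρ a = c • 1 := by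
  let f : ρ.IntertwiningMap ρ := ⟨ρ a, fun g => mem_centerModKer.mp ha g⟩
  obtain ⟨c, hc⟩ :=
    Representation.IsIrreducible.algebraMap_intertwiningMap_bijective_of_isAlgClosed.surjective f
  exact ⟨c, congrArg (fun F => F.toLinearMap) hc.symm⟩

theorem finrank_eq_one_of_forall_eq_smul_one [ρ.IsIrreducible]
    (hρ : ∀ g, ∃ c : k, ρ g = c • 1) : Module.finrank k V = 1 := by
  have hbot : (⊤ : Subrepresentation ρ).toSubmodule ≠ ⊥ := fun h =>
    top_ne_bot (Subrepresentation.toSubmodule_injective h)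
  obtain ⟨v, -, hv⟩ := Submodule.exists_mem_ne_zero_of_ne_bot hbot
  let line : Subrepresentation ρ := ⟨k ∙ v, fun g w hw => by
    obtain ⟨c, hc⟩ := hρ g
    simpa [hc] using Submodule.smul_mem _ c hw⟩
  have hmem : v ∈ line := Submodule.mem_span_singleton_self v
  have hline : line = ⊤ := (eq_bot_or_eq_top line).resolve_left fun h => hv (h ▸ hmem :)
  refine finrank_eq_one v hv fun w => Submodule.mem_span_singleton.mp ?_
  exact (hline ▸ trivial : w ∈ line)

theorem character_eq_of_eq_smul_one (hV : Module.finrank k V = 1) {g : G} {c : k}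
    (hg : ρ g = c • 1) : ρ.character g = c := by
  have : FiniteDimensional k V := Module.finite_of_finrank_eq_succ hV
  rw [Representation.character, hg, map_smul, LinearMap.trace_one, hV, Nat.cast_one, smul_eq_mul,
    mul_one]

theorem character_pow_card_eq_one [Finite G] (hV : Module.finrank k V = 1) (g : G) :
    ρ.character g ^ Nat.card G = 1 := by
  have : FiniteDimensional k V := Module.finite_of_finrank_eq_succ hV
  obtain ⟨c, hc, -⟩ := LinearMap.existsUnique_eq_smul_id_of_finrank_eq_one hV (ρ g)
  have hpow : ρ (g ^ Nat.card G) = c ^ Nat.card G • 1 := by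
    rw [map_pow, hc, ← Module.End.one_eq_id, smul_pow, one_pow]
  calc ρ.character g ^ Nat.card G
      = c ^ Nat.card G := by rw [character_eq_of_eq_smul_one ρ hV hc]
    _ = ρ.character (g ^ Nat.card G) := (character_eq_of_eq_smul_one ρ hV hpow).symm
    _ = 1 := by rw [pow_card_eq_one', ρ.char_one, hV, Nat.cast_one]

theorem character_eq_zero_of_commutatorElement_eq_smul_one {a g : G} {c : k}
    (hc : ρ ⁅a, g⁆ = c • 1) (hag : ¬ Commute (ρ a) (ρ g)) : ρ.character g = 0 := by
  have hconj : ρ (a * g * a⁻¹) = c • ρ g := by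
    rw [← inv_mul_cancel_right (a * g * a⁻¹) g, map_mul, ← commutatorElement_def, hc, smul_one_mul]
  have hne : c ≠ 1 := by
    rintro rfl
    refine hag ?_
    rw [commute_iff_eq, ← map_mul, ← map_mul, ← inv_mul_cancel_right (a * g) a, map_mul, hconj,
      one_smul, ← map_mul]
  have htrace : c * ρ.character g = ρ.character g := by
    conv_rhs => rw [← ρ.char_conj g a]
    rw [Representation.character, Representation.character, hconj, map_smul, smul_eq_mul]
  exact (mul_left_eq_self₀.mp htrace).resolve_left hne

theorem finrank_eq_one_or_exists_subgroup_character_eq_zero [IsAlgClosed k] [FiniteDimensional k V]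
    [Group.IsNilpotent G] [ρ.IsIrreducible] :
    Module.finrank k V = 1 ∨ ∃ H : Subgroup G, H ≠ ⊤ ∧ ∀ g ∉ H, ρ.character g = 0 := by
  by_cases htop : centerModKer ρ = ⊤
  · exact .inl <| finrank_eq_one_of_forall_eq_smul_one ρ fun g =>
      exists_eq_smul_one_of_mem_centerModKer ρ (htop ▸ Subgroup.mem_top g)
  · obtain ⟨a, ha, hcomm⟩ := exists_notMem_forall_commutatorElement_mem htop
    refine .inr ⟨centralizerModKer ρ a, centralizerModKer_ne_top ha, fun g hg => ?_⟩
    obtain ⟨c, hc⟩ := exists_eq_smul_one_of_mem_centerModKer ρ (hcomm g)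
    exact character_eq_zero_of_commutatorElement_eq_smul_one ρ hc (mt mem_centralizerModKer.mpr hg)

theorem stmt12_general [IsAlgClosed k] [FiniteDimensional k V] [Finite G] [Group.IsNilpotent G]
    [ρ.IsIrreducible] :
    Nat.card G ≤
      2 * {x : G | ρ.character x = 0 ∨ ∃ m : ℕ, 0 < m ∧ ρ.character x ^ m = 1}.ncard := by
  rcases finrank_eq_one_or_exists_subgroup_character_eq_zero ρ with hV | ⟨H, hH, hzero⟩
  · have huniv : {x : G | ρ.character x = 0 ∨ ∃ m : ℕ, 0 < m ∧ ρ.character x ^ m = 1} = .univ :=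
      Set.eq_univ_of_forall fun x =>
        .inr ⟨Nat.card G, Nat.card_pos, character_pow_card_eq_one ρ hV x⟩
    rw [huniv, Set.ncard_univ]
    lia
  · calc Nat.card G ≤ 2 * ((H : Set G)ᶜ).ncard := card_le_two_mul_ncard_compl hH
      _ ≤ _ := by
        gcongr
        · exact Set.toFinite _
        · exact fun x hx => .inl (hzero x hx)

end Representation

/-- If `G` is a finite nilpotent group and `χ` is an irreducible complex
character of `G`, then `χ(x)` is zero or a root of unity for at least `|G|/2` elements
`x ∈ G`. -/
theorem stmt12 {G : Type} [Group G] [Fintype G] [Group.IsNilpotent G]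
    (V : FDRep ℂ G) (hV : Simple V) :
    Fintype.card G ≤
      2 * {x : G | V.character x = 0 ∨ ∃ m : ℕ, 0 < m ∧ V.character x ^ m = 1}.ncard := by
  have := isIrreducible_of_simple V
  exact Fintype.card_eq_nat_card.trans_le (stmt12_general V.ρ)
end

section
/- Let p be a prime and let G be a non-abelian finite p-group of order p^n whose center Z(G) has order p, and suppose G has an abelian subgroup U of index p. Then for every g ∈ G − U the centralizer C_G(g) has order p^2, and consequently the conjugacy class of g has exactly p^(n−2) elements. -/
/-!
Since `U` has prime index it is a maximal subgroup, so an element of `U` commuting with some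
`g ∉ U` commutes with all of `G`. As `G` is non-abelian this gives `U ⊓ C_G(g) = Z(G)`, while
maximality also gives `U ⊔ C_G(g) = G`. In a `p`-group `U` is normal, so the second isomorphism
theorem yields `[C_G(g) : Z(G)] = [G : U] = p`.
-/

open Subgroup

theorem eq_pow_sub_of_pow_mul_eq_pow {p k m n : ℕ} (hp : 1 < p) (h : p ^ m * k = p ^ n) :
    k = p ^ (n - m) := by
  have hmn : m ≤ n := (Nat.pow_dvd_pow_iff_le_right hp).1 ⟨k, h.symm⟩
  refine Nat.eq_of_mul_eq_mul_left (pow_pos (zero_lt_one.trans hp) m) ?_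
  rw [h, pow_mul_pow_sub p hmn]

section Subgroups

variable {G : Type*} [Group G] {U H : Subgroup G}

theorem isCoatom_of_prime_index (hU : U.index.Prime) : IsCoatom U := by
  refine ⟨fun hU_top ↦ hU.ne_one (index_eq_one.2 hU_top), fun K hUK ↦ ?_⟩
  have hmul : U.relIndex K * K.index = U.index := relIndex_mul_index hUK.le
  have hne : U.relIndex K ≠ 1 := fun h ↦ hUK.not_ge (relIndex_eq_one.1 h)
  have heq : U.relIndex K = U.index := (hU.eq_one_or_self_of_dvd _ ⟨_, hmul.symm⟩).resolve_left hne
  rw [heq] at hmul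
  exact index_eq_one.1 (Nat.eq_of_mul_eq_mul_left hU.pos (hmul.trans (mul_one _).symm))

theorem relIndex_eq_index_of_codisjoint [U.Normal] (h : Codisjoint U H) :
    U.relIndex H = U.index := by
  rw [← relIndex_sup_left, h.eq_top, relIndex_top_right]

theorem card_mul_relIndex_of_le (h : U ≤ H) : Nat.card U * U.relIndex H = Nat.card H := by
  simpa only [relIndex_bot_left] using relIndex_mul_relIndex ⊥ U H bot_le h

theorem normal_of_index_eq_of_card_eq_prime_pow {p n : ℕ} (hp : p.Prime)
    (hG : Nat.card G = p ^ n) (hU : U.index = p) : U.Normal := by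
  have hn : n ≠ 0 := by
    rintro rfl
    exact hp.not_dvd_one (by simpa only [hU, hG, pow_zero] using U.index_dvd_card)
  apply normal_of_index_eq_minFac_card
  rw [hU, hG, hp.pow_minFac hn]

theorem codisjoint_centralizer_singleton {g : G} (hU : IsCoatom U) (hg : g ∉ U) :
    Codisjoint U (centralizer {g}) :=
  hU.not_le_iff_codisjoint.1 fun h ↦ hg (h (mem_centralizer_singleton_iff.2 rfl))

theorem ncard_setOf_isConj (g : G) : {x : G | IsConj g x}.ncard = (centralizer {g}).index := by
  have horbit : MulAction.orbit (ConjAct G) g = {x : G | IsConj g x} := by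
    ext x
    rw [ConjAct.mem_orbit_conjAct, isConj_comm, Set.mem_ofPred_eq]
  rw [← horbit, ← MulAction.index_stabilizer, ConjAct.stabilizer_eq_centralizer]
  rfl

end Subgroups

section MaximalAbelian

variable {G : Type*} [Group G] {U : Subgroup G} [IsMulCommutative U] {g : G}

theorem inf_centralizer_singleton_le_center (hU : IsCoatom U) (hg : g ∉ U) :
    U ⊓ centralizer {g} ≤ center G := by
  rintro x ⟨hxU, hxg⟩
  have hle : U ≤ centralizer {x} :=
    U.le_centralizer.trans (centralizer_le (Set.singleton_subset_iff.2 hxU))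
  have hgx : g ∈ centralizer {x} :=
    mem_centralizer_singleton_iff.2 (mem_centralizer_singleton_iff.1 hxg).symm
  have htop : centralizer {x} = ⊤ := hU.2 _ (lt_of_le_not_ge hle fun h ↦ hg (h hgx))
  exact centralizer_eq_top_iff_subset.1 htop rfl

theorem center_le_of_isCoatom (hU : IsCoatom U) (hG : ¬ IsMulCommutative G) :
    center G ≤ U := by
  intro z hz
  by_contra hzU
  have hU_le : U ≤ center G := fun u hu ↦
    inf_centralizer_singleton_le_center hU hzU
      ⟨hu, mem_centralizer_singleton_iff.2 (mem_center_iff.1 hz u)⟩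
  exact hG (center_eq_top_iff.1 (hU.2 _ (lt_of_le_not_ge hU_le fun h ↦ hzU (h hz))))

theorem inf_centralizer_singleton_eq_center (hU : IsCoatom U) (hG : ¬ IsMulCommutative G)
    (hg : g ∉ U) : U ⊓ centralizer {g} = center G :=
  (inf_centralizer_singleton_le_center hU hg).antisymm
    (le_inf (center_le_of_isCoatom hU hG) (center_le_centralizer _))

end MaximalAbelian

theorem stmt17_general {G : Type*} [Group G] {p : ℕ} (hp : p.Prime)
    (hna : ¬ ∀ x y : G, x * y = y * x)
    (U : Subgroup G) [U.Normal] (hUi : U.index = p)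
    (hUab : ∀ x ∈ U, ∀ y ∈ U, x * y = y * x) :
    ∀ g : G, g ∉ U →
      (center G).relIndex (centralizer {g}) = p ∧
        p * {x : G | IsConj g x}.ncard = (center G).index := by
  intro g hg
  have : IsMulCommutative U := .of_setLike_mul_comm hUab
  have hU : IsCoatom U := isCoatom_of_prime_index (hUi ▸ hp)
  have hrel : (center G).relIndex (centralizer {g}) = p := by
    rw [← inf_centralizer_singleton_eq_center hU (isMulCommutative_iff.not.2 hna) hg,
      inf_relIndex_right,
      relIndex_eq_index_of_codisjoint (codisjoint_centralizer_singleton hU hg), hUi]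
  refine ⟨hrel, ?_⟩
  rw [ncard_setOf_isConj, ← relIndex_mul_index (center_le_centralizer {g}), hrel]

/-- Let `G` be a non-abelian `p`-group of order `p^n` with `|Z(G)| = p`
and an abelian subgroup `U` of index `p`. Then for every `g ∈ G - U` the centralizer
`C_G(g)` has order `p^2`, and the conjugacy class of `g` has exactly `p^(n-2)` elements. -/
theorem stmt17 {G : Type*} [Group G] [Fintype G] {p n : ℕ} (hp : p.Prime)
    (hG : Fintype.card G = p ^ n)
    (hna : ¬ ∀ x y : G, x * y = y * x)
    (hZ : Nat.card (Subgroup.center G) = p)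
    (U : Subgroup G) (hUi : U.index = p)
    (hUab : ∀ x ∈ U, ∀ y ∈ U, x * y = y * x) :
    ∀ g : G, g ∉ U →
      Nat.card (Subgroup.centralizer {g} : Subgroup G) = p ^ 2 ∧
        {x : G | IsConj g x}.ncard = p ^ (n - 2) := by
  intro g hg
  rw [← Nat.card_eq_fintype_card] at hG
  have := normal_of_index_eq_of_card_eq_prime_pow hp hG hUi
  obtain ⟨hrel, hconj⟩ := stmt17_general hp hna U hUi hUab g hg
  constructor
  · rw [← card_mul_relIndex_of_le (center_le_centralizer {g}), hZ, hrel, sq]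
  · apply eq_pow_sub_of_pow_mul_eq_pow hp.one_lt
    rw [sq, mul_assoc, hconj, ← hG, ← card_mul_index (center G), hZ]
end
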